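/- Let m and p be positive integers and set l = 4mp−1, t = 4mp−2p−1, p' = 2mp−1. Let s and k be integers with 0 ≤ s ≤ 2m−1 and sp+1 ≤ k ≤ min((s+1)p, 2mp−1). Then σ_{i_k} = (−1)^s. -/

import Mathlib

open Finset

noncomputable section

/-- The q-Pochhammer symbol `(a; q)_n = ∏_{k=0}^{n-1} (1 - a q^k)`. -/
def qPoch (a q : ℂ) (n : ℕ) : ℂ := ∏ k ∈ Finset.range n, (1 - a * q ^ k)

/-- The Gaussian binomial coefficient `[n; k]_q` as a polynomial in `q` over `ℤ`,
defined by the q-Pascal rule `[n; k] = [n-1; k-1] + q^k [n-1; k]`.  It is the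
polynomial equal to `(q;q)_n / ((q;q)_{n-k} (q;q)_k)`. -/
def gaussPoly : ℕ → ℕ → Polynomial ℤ
  | _, 0 => 1
  | 0, _ + 1 => 0
  | n + 1, k + 1 => gaussPoly n k + Polynomial.X ^ (k + 1) * gaussPoly n (k + 1)

/-- The Gaussian binomial coefficient `[n; k]_q` evaluated at `q : ℂ`. -/
def gbin (q : ℂ) (n k : ℕ) : ℂ := Polynomial.aeval q (gaussPoly n k)

/-- `σ_j = (-1)^⌊(2j-1)t/l⌋`. -/
def sigmaT (l t j : ℕ) : ℤ := (-1) ^ ((2 * j - 1) * t / l)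

/-- `r(j)`: the unique integer with `r(j) ≡ (2j-1)t (mod 2l)` and `-l < r(j) < l`. -/
def rT (l t j : ℕ) : ℤ :=
  if (((2 * j - 1) * t % (2 * l) : ℕ) : ℤ) < (l : ℤ) then (((2 * j - 1) * t % (2 * l) : ℕ) : ℤ)
  else (((2 * j - 1) * t % (2 * l) : ℕ) : ℤ) - 2 * (l : ℤ)

/-- `r'(j) = (|r(j)| + 1)/2`. -/
def rpT (l t j : ℕ) : ℕ := ((rT l t j).natAbs + 1) / 2

open Classical in
/-- `i_k`: the unique `j ∈ {1, …, (l-1)/2}` with `r'(j) = k`. -/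
def iT (l t k : ℕ) : ℕ :=
  if h : ∃ j, j ∈ Finset.Icc 1 ((l - 1) / 2) ∧ rpT l t j = k then h.choose else 0

/-- `ε_{i,j,m}`: `1` if `j ≡ -i, -i-1 (mod 2m)`, `-1` if `j ≡ i, i-1 (mod 2m)`,
`0` otherwise (and `0` when `m ∣ i`, a case excluded in all uses). -/
def epsLO (m i j : ℕ) : ℤ :=
  if m ∣ i then 0
  else if 2 * m ∣ (i + j) ∨ 2 * m ∣ (i + j + 1) then 1
  else if (2 * (m : ℤ)) ∣ ((j : ℤ) - (i : ℤ)) ∨ (2 * (m : ℤ)) ∣ ((j : ℤ) - (i : ℤ) + 1) then -1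
  else 0

/-- `Δ_{i,j,m}`: `1` if `j ≡ -i, -i+1 (mod 2m)`, `-1` if `j ≡ i, i+1 (mod 2m)`,
`0` otherwise (and `0` when `m ∣ i`, a case excluded in all uses). -/
def deltaLO (m i j : ℕ) : ℤ :=
  if m ∣ i then 0
  else if 2 * m ∣ (i + j) ∨ 2 * m ∣ (i + j - 1) then 1
  else if (2 * (m : ℤ)) ∣ ((j : ℤ) - (i : ℤ)) ∨ (2 * (m : ℤ)) ∣ ((j : ℤ) - (i : ℤ) - 1) then -1
  else 0

/-- `γ_{i,m} = 1` if `i ≡ 1, …, m-1 (mod 2m)` and `-1` otherwise. -/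
def gamLO (m i : ℕ) : ℤ :=
  if 1 ≤ i % (2 * m) ∧ i % (2 * m) ≤ m - 1 then 1 else -1

/-- `β_{i,m} = 1` if `i ≡ 1, …, m-1 (mod 2m)`, `-1` if `i ≡ m+1, …, 2m-1 (mod 2m)`,
and `0` if `m ∣ i`. -/
def betLO (m i : ℕ) : ℤ :=
  if 1 ≤ i % (2 * m) ∧ i % (2 * m) ≤ m - 1 then 1
  else if m + 1 ≤ i % (2 * m) ∧ i % (2 * m) ≤ 2 * m - 1 then -1
  else 0

/-- Extend a tuple `f : Fin P → Fin N` to `n : ℕ → ℕ` with `n i = f (i-1)` for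
`1 ≤ i ≤ P` and `n i = 0` otherwise (in particular `n 0 = 0`). -/
def extTup (P N : ℕ) (f : Fin P → Fin N) : ℕ → ℕ :=
  fun i => if h : 1 ≤ i ∧ i ≤ P then (f ⟨i - 1, by omega⟩ : ℕ) else 0

/-- Takata's exponent `a(n)` (an integer; every integer division below is exact). -/
def aT (l t : ℕ) (n : ℕ → ℕ) : ℤ :=
  -(∑ j ∈ Icc 1 ((l - 1) / 2), (∑ k ∈ Icc (rpT l t j) ((l - 1) / 2),
      (sigmaT l t (iT l t k) + sigmaT l t (iT l t ((l - 1) / 2 + 1 - k))) / 2) *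
      ((n j : ℤ) - (n (j - 1) : ℤ)))
  - ∑ j ∈ Icc 1 ((l - 1) / 2 - 1), ((sigmaT l t (j + 1) + sigmaT l t ((l - 1) / 2 + 1 - j)) / 2) * (n j : ℤ)
  - ((sigmaT l t ((l - 1) / 2) + 1) / 2) * (n ((l - 1) / 2) : ℤ)
  - ∑ j ∈ Icc 1 ((l - 1) / 2), sigmaT l t j

/-- Takata's exponent `b₁(n)` (an integer; every integer division below is exact
whenever the factor it multiplies is nonzero). -/
def b1T (l t : ℕ) (n : ℕ → ℕ) : ℤ :=
  -aT l t n
  + ∑ k ∈ Icc 1 ((l - t) / 2), ((1 - sigmaT l t (iT l t k)) / 2) * (n (iT l t k - 1) : ℤ)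
  - ∑ k ∈ Icc ((l - t) / 2 + 1) ((l - 1) / 2), (n (iT l t k - 1) : ℤ)
  + ∑ k ∈ Icc ((l - t) / 2 + 1) ((l - 1) / 2), ((1 + sigmaT l t (iT l t k)) / 2) * (n (iT l t k) : ℤ)
  - (1 + sigmaT l t ((l - 1) / 2)) * (n ((l - 1) / 2) : ℤ)
  + ∑ j ∈ Icc 1 ((l - 1) / 2 - 1), ((sigmaT l t (j + 1) - sigmaT l t j) / 2) * (n j : ℤ)
  - ∑ k ∈ Icc 1 ((l - 1) / 2 - 1), ∑ k' ∈ Icc (k + 1) ((l - 1) / 2),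
      ((1 + Int.sign ((iT l t k : ℤ) - (iT l t k' : ℤ))) / 2) *
        ((sigmaT l t (iT l t k) - sigmaT l t (iT l t k')) / 2) *
        ((n (iT l t k) : ℤ) - (n (iT l t k - 1) : ℤ)) *
        ((n (iT l t k') : ℤ) - (n (iT l t k' - 1) : ℤ))
  + ∑ j ∈ Icc 1 ((l - 1) / 2), sigmaT l t j *
      (∑ k ∈ Icc 1 (rpT l t j), ((n (iT l t k) : ℤ) - (n (iT l t k - 1) : ℤ))) * (n (j - 1) : ℤ)

/-- Takata's exponent `b₂(n)`. -/
def b2T (l t : ℕ) (n : ℕ → ℕ) : ℤ :=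
  if l < 2 * t then
    ∑ k ∈ Icc ((l - t) / 2 + 1) ((t - 1) / 2),
      ((1 + sigmaT l t (iT l t k)) / 2) * (n (iT l t k - 1) : ℤ)
  else
    -∑ k ∈ Icc ((t + 1) / 2 + 1) ((l - t) / 2),
      ((1 + sigmaT l t (iT l t k)) / 2) * (n (iT l t k - 1) : ℤ)

/-- Takata's `κ(p')`. -/
def kapT (l t N : ℕ) (n : ℕ → ℕ) : ℤ :=
  if sigmaT l t ((l - 1) / 2) = -1 then -(N : ℤ) * (n ((l - 1) / 2) : ℤ) else 0

/-- Takata's `τ(j)`. -/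
def tauT (l t : ℕ) (q : ℂ) (n : ℕ → ℕ) (j : ℕ) : ℂ :=
  if sigmaT l t j = -1 then (-1 : ℂ) ^ (n j - n (j - 1))
  else q ^ ((((n j : ℤ) - (n (j - 1) : ℤ)) * (((n j : ℤ) - (n (j - 1) : ℤ)) + 1)) / 2)

/-- Takata's `X(n)`. -/
def XT (l t N : ℕ) (q : ℂ) (n : ℕ → ℕ) : ℂ :=
  (-1 : ℂ) ^ (n ((l - 1) / 2)) * q ^ kapT l t N n *
    (qPoch q q (N - 1) * qPoch q q (n ((l - 1) / 2)) / qPoch q q (N - n ((l - 1) / 2) - 1)) *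
    ∏ j ∈ Icc 1 ((l - 1) / 2), tauT l t q n j / qPoch q q (n j - n (j - 1))

/-!
The sign of `r(j)` is `σ_j`. All `r(j)` have the parity of `t`, so `r'(j)` determines `|r(j)|`, and
with it `±(2j-1)t` modulo `l`, hence `j` itself when `l` is odd and coprime to `t`. To compute
`σ_{i_k}` it therefore suffices to exhibit one `j` in `{1, …, (l-1)/2}` with `r(j) = ±(2k-1)`; the
sign is then `σ_{i_k}`.

For `l = 2np - 1` and `t = l - 2p` the factor `n` inverts `2p` modulo `l`. Writing
`k = sp + b + 1` with `0 ≤ b < p`, the number `c = s + n(2b+1)` satisfies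
`ct = l(c - (2b+1)) - (2k-1)`. If `c` is odd, `2j - 1 = c` gives `r(j) = -(2k-1)`; if `c` is even,
`2j - 1 = l - c` gives `r(j) = 2k-1`. Since `c` has the parity of `n + s`, the sign is
`(-1)^(n+s)`, which for `n = 2m` is `(-1)^s`.
-/

section Residues

variable {l t j k : ℕ}

theorem rT_eq_bmod (l t j : ℕ) : rT l t j = Int.bmod ((2 * j - 1) * t : ℕ) (2 * l) := by
  rw [rT, Int.bmod_def]
  push_cast
  rw [show (2 * (l : ℤ) + 1) / 2 = l by omega]

theorem rT_modEq (hj : 1 ≤ j) : rT l t j ≡ (2 * j - 1) * t [ZMOD 2 * l] := by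
  rw [rT_eq_bmod, Int.modEq_iff_dvd]
  have h := Int.dvd_self_sub_bmod (x := ((2 * j - 1) * t : ℕ)) (m := 2 * l)
  push_cast [show 1 ≤ 2 * j by omega] at h ⊢
  exact h

theorem rT_eq_of_modEq {r : ℤ} (hj : 1 ≤ j) (hr : |r| < l)
    (h : (2 * j - 1) * t ≡ r [ZMOD 2 * l]) : rT l t j = r := by
  rw [abs_lt] at hr
  rw [rT_eq_bmod, Int.bmod_eq_iff (by omega)]
  push_cast [show 1 ≤ 2 * j by omega]
  exact ⟨by omega, by omega, h.dvd⟩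

theorem rT_modEq_two (hj : 1 ≤ j) : rT l t j ≡ t [ZMOD 2] :=
  calc rT l t j ≡ (2 * j - 1) * t [ZMOD 2] := (rT_modEq hj).of_dvd (dvd_mul_right 2 _)
    _ ≡ t [ZMOD 2] := Int.modEq_iff_dvd.2 ⟨(1 - j) * t, by ring⟩

theorem sigmaT_eq_sign_rT (hl : 0 < l) (h : rT l t j ≠ 0) :
    sigmaT l t j = (rT l t j).sign := by
  rw [sigmaT]
  rw [rT] at h ⊢
  generalize (2 * j - 1) * t = x at h ⊢
  have hx : x % (2 * l) < 2 * l := Nat.mod_lt _ (by omega)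
  rcases lt_or_ge (x % (2 * l)) l with hxl | hxl
  · have heven : Even (x / l) := Nat.even_div.2 (Nat.div_eq_of_lt hxl)
    rw [if_pos (mod_cast hxl)] at h ⊢
    rw [heven.neg_one_pow, Int.sign_eq_one_of_pos (by omega)]
  · have hodd : Odd (x / l) := by
      rw [← Nat.not_even_iff_odd, Nat.even_div, Nat.div_eq_zero_iff_lt hl]
      exact hxl.not_gt
    rw [if_neg (mod_cast hxl.not_gt), hodd.neg_one_pow, Int.sign_eq_neg_one_of_neg (by omega)]

theorem rpT_eq_iff_natAbs_rT_eq {i : ℕ} (hi : 1 ≤ i) (hj : 1 ≤ j) :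
    rpT l t i = rpT l t j ↔ (rT l t i).natAbs = (rT l t j).natAbs := by
  have hparity : rT l t i % 2 = rT l t j % 2 := (rT_modEq_two hi).trans (rT_modEq_two hj).symm
  unfold rpT
  omega

theorem rpT_injOn (hl : Odd l) (hlt : l.Coprime t) :
    Set.InjOn (rpT l t) (Icc 1 ((l - 1) / 2) : Finset ℕ) := by
  intro i hi j hj h
  rw [mem_coe, mem_Icc] at hi hj
  have cancel {a : ℤ} (ha : (l : ℤ) ∣ 2 * a * t) : (l : ℤ) ∣ a := by
    have hl2 : IsCoprime (l : ℤ) 2 := by exact_mod_cast hl.coprime_two_right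
    exact hl2.dvd_of_dvd_mul_left <|
      (Nat.isCoprime_iff_coprime.2 hlt).dvd_of_dvd_mul_right ha
  have hmodi : rT l t i ≡ (2 * i - 1) * t [ZMOD l] := (rT_modEq hi.1).of_dvd (dvd_mul_left _ 2)
  have hmodj : rT l t j ≡ (2 * j - 1) * t [ZMOD l] := (rT_modEq hj.1).of_dvd (dvd_mul_left _ 2)
  rcases Int.natAbs_eq_natAbs_iff.1 ((rpT_eq_iff_natAbs_rT_eq hi.1 hj.1).1 h) with heq | hneg
  · rw [heq] at hmodi
    have hdvd : (l : ℤ) ∣ i - j := cancel <| by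
      convert (hmodj.symm.trans hmodi).dvd using 1
      ring
    have := Int.eq_zero_of_abs_lt_dvd hdvd (abs_lt.2 (by omega))
    omega
  · rw [hneg] at hmodi
    have hdvd : (l : ℤ) ∣ i + j - 1 := cancel <| by
      convert (hmodj.neg.symm.trans hmodi).dvd using 1
      ring
    have := Int.le_of_dvd (by omega) hdvd
    omega

theorem iT_rpT (hl : Odd l) (hlt : l.Coprime t) (hj : j ∈ Icc 1 ((l - 1) / 2)) :
    iT l t (rpT l t j) = j := by
  have h : ∃ i, i ∈ Icc 1 ((l - 1) / 2) ∧ rpT l t i = rpT l t j := ⟨j, hj, rfl⟩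
  rw [iT, dif_pos h]
  exact rpT_injOn hl hlt h.choose_spec.1 hj h.choose_spec.2

theorem sigmaT_iT_of_rT_eq {e : ℕ} (hl : Odd l) (hlt : l.Coprime t) (hk : 1 ≤ k)
    (hj : j ∈ Icc 1 ((l - 1) / 2)) (h : rT l t j = (-1) ^ e * (2 * k - 1)) :
    sigmaT l t (iT l t k) = (-1) ^ e := by
  have hrp : rpT l t j = k := by
    rcases neg_one_pow_eq_or ℤ e with he | he <;> rw [he] at h <;> rw [rpT] <;> omega
  have hpos : (0 : ℤ) < 2 * k - 1 := by omega
  have hsign : (rT l t j).sign = (-1) ^ e := by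
    rw [h, Int.sign_mul, Int.sign_eq_one_of_pos hpos, mul_one]
    rcases neg_one_pow_eq_or ℤ e with he | he <;> simp [he]
  have hne : rT l t j ≠ 0 := h ▸ mul_ne_zero (by simp) hpos.ne'
  rw [← hrp, iT_rpT hl hlt hj, sigmaT_eq_sign_rT hl.pos hne, hsign]

end Residues

section Preimage

variable {n p l t s b j : ℕ}

theorem coprime_of_add_one_eq_two_mul (hl : l + 1 = 2 * n * p) (ht : t + 2 * p = l) :
    l.Coprime t := by
  rw [← Nat.isCoprime_iff_coprime]
  zify at hl ht
  exact ⟨n - 1, -n, by linear_combination (-n : ℤ) * ht - hl⟩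

theorem add_mul_two_mul_add_one_lt (hl : l + 1 = 2 * n * p) (hb : b < p)
    (hk : s * p + b + 1 < n * p) : s + n * (2 * b + 1) < l := by
  have hsn : s < n := by
    by_contra! h
    have := Nat.mul_le_mul_right p h
    omega
  rcases (show b + 1 = p ∨ b + 2 ≤ p by omega) with rfl | hb
  · have hsn1 : s + 1 < n := by
      by_contra! h
      have := Nat.mul_le_mul_right (b + 1) h
      lia
    lia
  · have := Nat.mul_le_mul_left n hb
    lia

theorem add_mul_two_mul_add_one_mul (hl : l + 1 = 2 * n * p) (ht : t + 2 * p = l) :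
    (s + n * (2 * b + 1) : ℤ) * t =
      l * (s + n * (2 * b + 1) - (2 * b + 1)) - (2 * (s * p + b) + 1) := by
  zify at hl ht
  linear_combination (s + n * (2 * b + 1) : ℤ) * ht + (2 * b + 1 : ℤ) * hl

theorem rT_eq_neg_of_two_mul_eq (hl : l + 1 = 2 * n * p) (ht : t + 2 * p = l)
    (hk : 2 * (s * p + b) + 1 < l) (hj : 2 * j = s + n * (2 * b + 1) + 1) :
    rT l t j = -(2 * (s * p + b) + 1) := by
  have hmul := add_mul_two_mul_add_one_mul (s := s) (b := b) hl ht
  refine rT_eq_of_modEq (by omega) ?_ (Int.modEq_iff_dvd.2 ⟨b + 1 - j, ?_⟩)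
  · rw [abs_neg, abs_of_nonneg (by positivity)]
    exact_mod_cast hk
  · zify at hj
    linear_combination (l - t : ℤ) * hj - hmul

theorem rT_eq_of_two_mul_add_eq (hl : l + 1 = 2 * n * p) (ht : t + 2 * p = l)
    (hk : 2 * (s * p + b) + 1 < l) (hj1 : 1 ≤ j)
    (hj : 2 * j + (s + n * (2 * b + 1)) = l + 1) :
    rT l t j = 2 * (s * p + b) + 1 := by
  have hmul := add_mul_two_mul_add_one_mul (s := s) (b := b) hl ht
  refine rT_eq_of_modEq hj1 ?_ (Int.modEq_iff_dvd.2 ⟨p - j - b, ?_⟩)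
  · rw [abs_of_nonneg (by positivity)]
    exact_mod_cast hk
  · zify at ht hj
    linear_combination (l - t : ℤ) * hj + hmul - (l : ℤ) * ht

theorem exists_rT_eq (hl : l + 1 = 2 * n * p) (ht : t + 2 * p = l) (hb : b < p)
    (hk : s * p + b + 1 < n * p) :
    ∃ j ∈ Icc 1 ((l - 1) / 2), rT l t j = (-1) ^ (n + s) * (2 * (s * p + b) + 1) := by
  have hlt := add_mul_two_mul_add_one_lt hl hb hk
  have hpos : 0 < n * (2 * b + 1) := Nat.mul_pos (by lia) (by omega)
  have hkl : 2 * (s * p + b) + 1 < l := by lia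
  have hodd : l % 2 = 1 := by lia
  rcases Nat.even_or_odd (n + s) with he | ho
  · obtain ⟨i, hi⟩ : Even (s + n * (2 * b + 1)) := by grind
    obtain ⟨j, hj⟩ : ∃ j, 2 * j + (s + n * (2 * b + 1)) = l + 1 := ⟨(l + 1) / 2 - i, by omega⟩
    refine ⟨j, mem_Icc.2 (by omega), ?_⟩
    rw [he.neg_one_pow, one_mul]
    exact rT_eq_of_two_mul_add_eq hl ht hkl (by omega) hj
  · obtain ⟨i, hi⟩ : Odd (s + n * (2 * b + 1)) := by grind
    refine ⟨i + 1, mem_Icc.2 (by omega), ?_⟩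
    rw [ho.neg_one_pow, neg_one_mul]
    exact rT_eq_neg_of_two_mul_eq hl ht hkl (by omega)

end Preimage

theorem sigma_iT_formula_neg_neg_general {n p s k : ℕ} (hn : 2 ≤ n) (hk1 : s * p + 1 ≤ k)
    (hk2 : k ≤ min ((s + 1) * p) (n * p - 1)) :
    sigmaT (2 * n * p - 1) (2 * n * p - 2 * p - 1)
      (iT (2 * n * p - 1) (2 * n * p - 2 * p - 1) k) = (-1) ^ (n + s) := by
  obtain ⟨b, rfl⟩ : ∃ b, k = s * p + b + 1 := ⟨k - (s * p + 1), by omega⟩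
  have hb : b < p := by rw [le_min_iff, add_one_mul] at hk2; omega
  have hnp : 2 * p ≤ n * p := Nat.mul_le_mul_right p hn
  have hl : 2 * n * p - 1 + 1 = 2 * n * p := by lia
  have ht : 2 * n * p - 2 * p - 1 + 2 * p = 2 * n * p - 1 := by lia
  obtain ⟨j, hj, hr⟩ := exists_rT_eq hl ht hb (s := s) (by omega)
  refine sigmaT_iT_of_rT_eq (by grind) (coprime_of_add_one_eq_two_mul hl ht) (by omega) hj ?_
  rw [hr]
  push_cast
  ring

/-- Lemma 2.2(iii): for `l = 4mp-1`, `t = 4mp-2p-1`, `σ_(i_k)` alternates between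
`1` and `-1` on successive intervals of length `p`, starting with `1`. -/
theorem sigma_iT_formula_neg_neg
    (m p s k : ℕ) (hm : 0 < m) (hp : 0 < p)
    (hs : s ≤ 2 * m - 1) (hk1 : s * p + 1 ≤ k)
    (hk2 : k ≤ min ((s + 1) * p) (2 * m * p - 1)) :
    sigmaT (4 * m * p - 1) (4 * m * p - 2 * p - 1) (iT (4 * m * p - 1) (4 * m * p - 2 * p - 1) k) = (-1 : ℤ) ^ s := by
  have h := sigma_iT_formula_neg_neg_general (n := 2 * m) (by omega) hk1 hk2
  rwa [← mul_assoc, pow_add, (even_two_mul m).neg_one_pow, one_mul] at h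

end
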